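/- For every integer k ≥ 1 and every real s > 1, the derivative of P_k satisfies P_k′(s) = ∑_{j=1}^{k} P_{k−j}(s) P′(js), where P′ denotes the derivative of the prime zeta function P and P_0(s) = 1 by convention. -/

import Mathlib

open MeasureTheory Real

/-- The prime zeta function `P(s) = ∑_p p^{-s}` (sum over all primes). -/
noncomputable def primeZeta (s : ℝ) : ℝ := ∑' p : Nat.Primes, (p.1 : ℝ) ^ (-s)

/-- The set of `k`-almost primes: positive integers with exactly `k` prime
factors counted with multiplicity. -/
def almostPrimes (k : ℕ) : Set ℕ := {n | 0 < n ∧ n.primeFactorsList.length = k}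

/-- `P_k(s) = ∑_{n ∈ N_k} n^{-s}`; note `P_0(s) = 1` since `N_0 = {1}`. -/
noncomputable def Pk (k : ℕ) (s : ℝ) : ℝ := ∑' n : almostPrimes k, (n.1 : ℝ) ^ (-s)

/-- Translated sum `f(A, h) = ∑_{a ∈ A} 1/(a (log a + h))`. -/
noncomputable def transSum (A : Set ℕ) (h : ℝ) : ℝ :=
  ∑' a : A, 1 / ((a.1 : ℝ) * (Real.log a.1 + h))

/-! Differentiating `P_k` termwise attaches the weight `log n` to each `n ∈ N_k`. Now `log = Λ * 1`
under Dirichlet convolution, and `Ω` is additive, so restricting this identity to `N_k` gives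
`1_{N_k} log = ∑_{j ≤ k} (1_{N_j} Λ) * 1_{N_{k-j}}`. For `j = 0` the first factor vanishes, and for
`j ≥ 1` it is supported on the powers `p ^ j` of primes, with value `log p` there, so its Dirichlet
series at `s` is `∑_p (log p) p^{-js} = -P'(js)`. -/

section

open ArithmeticFunction LSeries
open scoped LSeries.notation ArithmeticFunction.Omega
open Finset.HasAntidiagonal (antidiagonal)

section Indicator

variable {f : ℕ → ℂ} {s : ℂ}

lemma LSeriesSummable_indicator (A : Set ℕ) (hf : LSeriesSummable f s) :
    LSeriesSummable (A.indicator f) s := by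
  refine (Summable.indicator hf A).congr fun n ↦ ?_
  by_cases hn : n ∈ A <;> simp [LSeries.term, hn]

lemma abscissaOfAbsConv_indicator_le (A : Set ℕ) (f : ℕ → ℂ) :
    abscissaOfAbsConv (A.indicator f) ≤ abscissaOfAbsConv f :=
  abscissaOfAbsConv_le_of_forall_lt_LSeriesSummable' fun _ hx ↦
    LSeriesSummable_indicator A (LSeriesSummable_of_abscissaOfAbsConv_lt_re (by simpa using hx))

lemma abscissaOfAbsConv_indicator_one_lt (A : Set ℕ) (hs : 1 < s.re) :
    abscissaOfAbsConv (A.indicator 1) < s.re :=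
  (abscissaOfAbsConv_indicator_le A 1).trans_lt
    (by simpa only [abscissaOfAbsConv_one] using mod_cast hs)

lemma deriv_LSeries_indicator_one (A : Set ℕ) (hs : 1 < s.re) :
    deriv (LSeries (A.indicator 1)) s = -LSeries (A.indicator ↗Complex.log) s := by
  rw [LSeries_deriv (abscissaOfAbsConv_indicator_one_lt A hs)]
  congr 2 with n
  by_cases hn : n ∈ A <;> simp [logMul, hn]

end Indicator

lemma LSeries_eq_LSeries_comp_pow {f : ℕ → ℂ} {j : ℕ} (hj : j ≠ 0)
    (hf : Function.support f ⊆ Set.range (· ^ j)) (s : ℂ) :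
    LSeries f s = LSeries (fun n ↦ f (n ^ j)) (j * s) := by
  have hsupp : Function.support (term f s) ⊆ Set.range (· ^ j) :=
    fun n hn ↦ hf fun hfn ↦ hn (by simp [term_def, hfn])
  rw [LSeries, ← (Nat.pow_left_injective hj).tsum_eq hsupp]
  refine tsum_congr fun n ↦ ?_
  simp [term_def, hj, Complex.natCast_cpow_natCast_mul]

lemma ofReal_deriv_of_hasDerivAt {F : ℂ → ℂ} {F' : ℂ} {f : ℝ → ℝ} {x : ℝ}
    (hF : HasDerivAt F F' x) (hf : ∀ᶠ y : ℝ in nhds x, (f y : ℂ) = F y) :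
    (↑(deriv f x) : ℂ) = F' := by
  have hcast : HasDerivAt (fun y : ℝ ↦ (f y : ℂ)) F' x := hF.comp_ofReal.congr_of_eventuallyEq hf
  have hre : HasDerivAt f F'.re x :=
    hF.real_of_complex.congr_of_eventuallyEq (hf.mono fun _ hy ↦ congrArg Complex.re hy)
  rw [hre.deriv]
  exact hre.ofReal_comp.unique hcast

section RealVariable

variable {A : Set ℕ}

lemma LSeries_indicator_one_ofReal (hA : 0 ∉ A) (s : ℝ) :
    LSeries (A.indicator 1) s = (∑' n : A, (n : ℝ) ^ (-s) : ℝ) := by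
  rw [tsum_subtype A fun n : ℕ ↦ (n : ℝ) ^ (-s), Complex.ofReal_tsum]
  refine tsum_congr fun n ↦ ?_
  by_cases hn : n ∈ A
  · have hn0 : n ≠ 0 := ne_of_mem_of_not_mem hn hA
    simp [term_of_ne_zero hn0, hn, Real.rpow_neg, Complex.ofReal_cpow]
  · simp [LSeries.term, hn]

lemma ofReal_deriv_tsum_rpow_neg (hA : 0 ∉ A) {s : ℝ} (hs : 1 < s) :
    (↑(deriv (fun t : ℝ ↦ ∑' n : A, (n : ℝ) ^ (-t)) s) : ℂ) =
      deriv (LSeries (A.indicator 1)) s :=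
  ofReal_deriv_of_hasDerivAt
    (LSeries_hasDerivAt
      (abscissaOfAbsConv_indicator_one_lt A (by simpa))).differentiableAt.hasDerivAt
    (.of_forall fun t ↦ (LSeries_indicator_one_ofReal hA t).symm)

end RealVariable

section AlmostPrimes

variable {j k n : ℕ}

lemma mem_almostPrimes_iff : n ∈ almostPrimes k ↔ n ≠ 0 ∧ Ω n = k := by
  simp [almostPrimes, cardFactors_apply, Nat.pos_iff_ne_zero]

lemma zero_notMem_almostPrimes (k : ℕ) : 0 ∉ almostPrimes k := by
  simp [mem_almostPrimes_iff]

lemma almostPrimes_zero : almostPrimes 0 = {1} := by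
  ext n
  rw [mem_almostPrimes_iff, cardFactors_eq_zero_iff_eq_zero_or_one, Set.mem_singleton_iff]
  grind

lemma pow_mem_almostPrimes_iff_prime (hj : j ≠ 0) : n ^ j ∈ almostPrimes j ↔ n.Prime := by
  rw [mem_almostPrimes_iff, cardFactors_pow, mul_eq_left₀ hj, cardFactors_eq_one_iff_prime]
  exact and_iff_right_of_imp fun hn ↦ pow_ne_zero j hn.ne_zero

lemma sum_antidiagonal_indicator_almostPrimes_mul {R : Type*} [Semiring R] (k : ℕ) (f g : ℕ → R)
    {a b : ℕ} (hab : a * b ≠ 0) :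
    ∑ ij ∈ antidiagonal k, (almostPrimes ij.1).indicator f a * (almostPrimes ij.2).indicator g b =
      (almostPrimes k).indicator (fun _ ↦ f a * g b) (a * b) := by
  obtain ⟨ha, hb⟩ := mul_ne_zero_iff.1 hab
  classical
  simp_rw [Set.indicator_apply, mem_almostPrimes_iff, cardFactors_mul ha hb]
  by_cases hk : Ω a + Ω b = k
  · rw [Finset.sum_eq_single (Ω a, Ω b)]
    · simp [ha, hb, hk]
    · rintro ⟨i, j⟩ - hij
      grind
    · simp [hk]
  · rw [Finset.sum_eq_zero]
    · simp [hk]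
    · rintro ⟨i, j⟩ hij
      rw [Finset.HasAntidiagonal.mem_antidiagonal] at hij
      grind

lemma indicator_almostPrimes_convolution {R : Type*} [Semiring R] (k : ℕ) (f g : ℕ → R) :
    (almostPrimes k).indicator (f ⍟ g) =
      ∑ ij ∈ antidiagonal k,
        (almostPrimes ij.1).indicator f ⍟ (almostPrimes ij.2).indicator g := by
  ext n
  calc (almostPrimes k).indicator (f ⍟ g) n
    _ = ∑ ab ∈ n.divisorsAntidiagonal,
          (almostPrimes k).indicator (fun _ ↦ f ab.1 * g ab.2) n := by
      by_cases hn : n ∈ almostPrimes k <;> simp [LSeries.convolution_def, hn]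
    _ = ∑ ab ∈ n.divisorsAntidiagonal, ∑ ij ∈ antidiagonal k,
          (almostPrimes ij.1).indicator f ab.1 * (almostPrimes ij.2).indicator g ab.2 := by
      refine Finset.sum_congr rfl fun ab hab ↦ ?_
      obtain ⟨rfl, hab⟩ := Nat.mem_divisorsAntidiagonal.1 hab
      rw [sum_antidiagonal_indicator_almostPrimes_mul k f g hab]
    _ = _ := by
      rw [Finset.sum_comm]
      simp only [Finset.sum_apply, LSeries.convolution_def]

lemma indicator_almostPrimes_zero_vonMangoldt : (almostPrimes 0).indicator ↗Λ = 0 := by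
  rw [almostPrimes_zero, Set.indicator_eq_zero']
  simp

lemma support_indicator_almostPrimes_vonMangoldt_subset (j : ℕ) :
    Function.support ((almostPrimes j).indicator ↗Λ) ⊆ Set.range (· ^ j) := by
  rintro n hn
  rw [Function.mem_support, Set.indicator_apply_ne_zero] at hn
  obtain ⟨hnj, hΛ⟩ := hn
  have hpow : IsPrimePow n := vonMangoldt_ne_zero_iff.1 (Complex.ofReal_ne_zero.1 hΛ)
  obtain ⟨p, i, hp, -, rfl⟩ := (isPrimePow_nat_iff n).1 hpow
  rw [mem_almostPrimes_iff, cardFactors_apply_prime_pow hp] at hnj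
  exact ⟨p, by simp [hnj.2]⟩

lemma LSeries_indicator_almostPrimes_vonMangoldt (hj : j ≠ 0) (s : ℂ) :
    LSeries ((almostPrimes j).indicator ↗Λ) s =
      LSeries ({p | p.Prime}.indicator ↗Complex.log) (j * s) := by
  rw [LSeries_eq_LSeries_comp_pow hj (support_indicator_almostPrimes_vonMangoldt_subset j)]
  congr 1 with n
  by_cases hn : n.Prime
  · simp [Set.indicator, pow_mem_almostPrimes_iff_prime hj, hn, vonMangoldt_apply_pow hj,
      vonMangoldt_apply_prime hn]
  · simp [Set.indicator, pow_mem_almostPrimes_iff_prime hj, hn]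

lemma LSeries_indicator_almostPrimes_log (k : ℕ) {s : ℂ} (hs : 1 < s.re) :
    LSeries ((almostPrimes k).indicator ↗Complex.log) s =
      ∑ j ∈ Finset.Icc 1 k, LSeries ((almostPrimes (k - j)).indicator 1) s *
        LSeries ({p | p.Prime}.indicator ↗Complex.log) (j * s) := by
  have hone : LSeriesSummable 1 s := LSeriesSummable_one_iff.2 hs
  have hΛ : LSeriesSummable ↗Λ s := LSeriesSummable_vonMangoldt hs
  calc LSeries ((almostPrimes k).indicator ↗Complex.log) s
    _ = ∑ ij ∈ antidiagonal k, LSeries ((almostPrimes ij.1).indicator ↗Λ) s *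
          LSeries ((almostPrimes ij.2).indicator 1) s := by
      rw [← convolution_vonMangoldt_const_one, indicator_almostPrimes_convolution, LSeries_sum]
      · exact Finset.sum_congr rfl fun ij _ ↦ LSeries_convolution'
          (LSeriesSummable_indicator _ hΛ) (LSeriesSummable_indicator _ hone)
      · exact fun ij _ ↦ LSeriesSummable.convolution
          (LSeriesSummable_indicator _ hΛ) (LSeriesSummable_indicator _ hone)
    _ = ∑ j ∈ Finset.range (k + 1), LSeries ((almostPrimes j).indicator ↗Λ) s *
          LSeries ((almostPrimes (k - j)).indicator 1) s :=
      Finset.Nat.sum_antidiagonal_eq_sum_range_succ_mk _ k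
    _ = ∑ j ∈ Finset.Icc 1 k, LSeries ((almostPrimes j).indicator ↗Λ) s *
          LSeries ((almostPrimes (k - j)).indicator 1) s := by
      rw [Finset.sum_range_eq_add_Ico _ k.succ_pos, indicator_almostPrimes_zero_vonMangoldt]
      simp [Finset.Ico_add_one_right_eq_Icc]
    _ = _ := by
      refine Finset.sum_congr rfl fun j hj ↦ ?_
      have hj0 : j ≠ 0 := Nat.one_le_iff_ne_zero.1 (Finset.mem_Icc.1 hj).1
      rw [LSeries_indicator_almostPrimes_vonMangoldt hj0, mul_comm]

lemma ofReal_Pk (k : ℕ) (s : ℝ) : (Pk k s : ℂ) = LSeries ((almostPrimes k).indicator 1) s :=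
  (LSeries_indicator_one_ofReal (zero_notMem_almostPrimes k) s).symm

lemma ofReal_deriv_Pk (k : ℕ) {s : ℝ} (hs : 1 < s) :
    (↑(deriv (Pk k) s) : ℂ) = deriv (LSeries ((almostPrimes k).indicator 1)) s :=
  ofReal_deriv_tsum_rpow_neg (zero_notMem_almostPrimes k) hs

lemma ofReal_deriv_primeZeta {s : ℝ} (hs : 1 < s) :
    (↑(deriv primeZeta s) : ℂ) = deriv (LSeries ({p | p.Prime}.indicator 1)) s :=
  ofReal_deriv_tsum_rpow_neg (A := {p | p.Prime}) Nat.not_prime_zero hs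

theorem stmt_7_general (k : ℕ) {s : ℂ} (hs : 1 < s.re) :
    deriv (LSeries ((almostPrimes k).indicator 1)) s =
      ∑ j ∈ Finset.Icc 1 k, LSeries ((almostPrimes (k - j)).indicator 1) s *
        deriv (LSeries ({p | p.Prime}.indicator 1)) (j * s) := by
  rw [deriv_LSeries_indicator_one _ hs, LSeries_indicator_almostPrimes_log k hs,
    ← Finset.sum_neg_distrib]
  refine Finset.sum_congr rfl fun j hj ↦ ?_
  have hjs : 1 < (j * s).re := by
    simpa using one_lt_mul_of_le_of_lt (mod_cast (Finset.mem_Icc.1 hj).1 : (1 : ℝ) ≤ j) hs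
  rw [deriv_LSeries_indicator_one _ hjs, mul_neg]

end AlmostPrimes

end

/-- For every `k ≥ 1` and real `s > 1`,
`P_k′(s) = ∑_{j=1}^k P_{k−j}(s) P′(js)` (with `P_0 = 1`). -/
theorem stmt_7 (k : ℕ) (hk : 1 ≤ k) (s : ℝ) (hs : 1 < s) :
    deriv (Pk k) s
      = ∑ j ∈ Finset.Icc 1 k, Pk (k - j) s * deriv primeZeta ((j : ℝ) * s) := by
  apply Complex.ofReal_injective
  rw [ofReal_deriv_Pk k hs, stmt_7_general k (by simpa using hs), Complex.ofReal_sum]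
  refine Finset.sum_congr rfl fun j hj ↦ ?_
  have hjs : 1 < j * s := one_lt_mul_of_le_of_lt (mod_cast (Finset.mem_Icc.1 hj).1) hs
  rw [Complex.ofReal_mul, ofReal_Pk, ofReal_deriv_primeZeta hjs, Complex.ofReal_mul,
    Complex.ofReal_natCast]
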